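/- arXiv:1708.07209 — 4 statements merged into one kernel-verified Lean document; each statement's English description precedes it below -/
import Mathlib

section
/- Let G be a finite group and let C(G) be the synchronous transducer on alphabet G with state set G, transition π(x, g) = gx and output λ(x, g) = gx (its Cayley machine). Then for every m ≥ 1: (i) distinct states u ≠ v of the m-fold product C(G)^m induce distinct maps (C(G)^m)_u ≠ (C(G)^m)_v on G^ℕ; (ii) every state of C(G)^m is accessible from every other state: for all u, v ∈ G^m there is a word w over G with π_{C(G)^m}(w, u) = v. Consequently the minimal transducer representing C(G)^m (identifying ω-equivalent states) has exactly |G|^m states. -/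
/-!
For a state `u` of `C(G)^m`, reading `x` replaces `u i` by the partial product
`u i * ⋯ * u 0 * x`, and the letter written is the new last coordinate. Hence each letter acts
on `G^m` as a permutation (`step_injective`), and since `G` is finite its inverse is again the
action of a word (`exists_return`).

Minimality: ω-equivalence (`OmegaEq`, tested on finite words) is therefore preserved both by
reading a letter and by undoing one. The last coordinate of `step x u` is an output, and every
state has the form `step x u`, so ω-equivalent states agree in the last coordinate. From
`step x u (i + 1) = u (i + 1) * step x u i`, agreement in coordinate `i + 1` for all
ω-equivalent pairs forces agreement in coordinate `i` (`OmegaEq.eq`).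

Transitivity: reachability is an equivalence relation, and any single coordinate of a state may
be changed at will within its class (`reach_update`). For coordinate `0`, two states differing
only there have a common successor. For coordinate `k + 1`, conjugating a change of coordinate
`k` by the letter `1` changes coordinates `k` and `k + 1` only, the latter arbitrarily, and
coordinate `k` can then be restored.
-/

/-- A synchronous transducer with alphabet `X` and state set `Q`:
`step x q` is the state reached after reading letter `x` at state `q`, and
`out x q` is the letter written. -/
structure Transducer (X : Type*) (Q : Type*) where
  step : X → Q → Q
  out : X → Q → X

namespace Transducer

variable {X Q R : Type*}

/-- The transition function extended to words (read left to right). -/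
def stepW (T : Transducer X Q) : List X → Q → Q
  | [], q => q
  | x :: w, q => T.stepW w (T.step x q)

/-- The output function extended to words. -/
def outW (T : Transducer X Q) : List X → Q → List X
  | [], _ => []
  | x :: w, q => T.out x q :: T.outW w (T.step x q)

theorem stepW_append (T : Transducer X Q) (u v : List X) (q : Q) :
    T.stepW (u ++ v) q = T.stepW v (T.stepW u q) := by
  induction u generalizing q with
  | nil => rfl
  | cons x u ih => simpa [stepW] using ih (T.step x q)

/-- `T` is synchronizing at level `k`: the state reached after reading any word of
length `k` is independent of the starting state. -/
def Synchronizing (T : Transducer X Q) (k : ℕ) : Prop :=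
  ∀ Γ : List X, Γ.length = k → ∀ p q : Q, T.stepW Γ p = T.stepW Γ q

/-- A state is in the core of `T` if it is forced by some nonempty word. -/
def InCore (T : Transducer X Q) (q : Q) : Prop :=
  ∃ Γ : List X, Γ ≠ [] ∧ ∀ p : Q, T.stepW Γ p = q

/-- `T` is core if every state is forced. -/
def IsCore (T : Transducer X Q) : Prop := ∀ q : Q, T.InCore q

/-- The map on one-sided infinite sequences induced by the state `q`. -/
def stateMap (T : Transducer X Q) (q : Q) (x : ℕ → X) : ℕ → X :=
  fun i => T.out (x i) (T.stepW ((List.range i).map x) q)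

/-- Every state of `T` is a homeomorphism state. -/
def AllHomeo (T : Transducer X Q) : Prop := ∀ q : Q, Function.Bijective (T.stateMap q)

/-- `T` is invertible: every state acts as a bijection on single letters. -/
def Invertible (T : Transducer X Q) : Prop :=
  ∀ q : Q, Function.Bijective fun x => T.out x q

/-- The map `f_T` on bi-infinite sequences induced by a transducer synchronizing at
level `k`; the letter at position `i` of the image is obtained by processing `x i`
from the state reached after reading `x (i-k), …, x (i-1)` starting at the basepoint
state `q0` (when `T` is synchronizing at level `k` this is the forced state, and the
map does not depend on the choice of `q0`). -/
def zmap (T : Transducer X Q) (k : ℕ) (q0 : Q) (x : ℤ → X) : ℤ → X :=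
  fun i => T.out (x i) (T.stepW ((List.range k).map fun j => x (i - (k : ℤ) + (j : ℤ))) q0)

/-- The composite map on one-sided sequences represented by a word of states,
applied leftmost letter first. -/
def wordMap (T : Transducer X Q) : List Q → (ℕ → X) → ℕ → X
  | [], x => x
  | q :: w, x => T.wordMap w (T.stateMap q x)

/-- A bi-infinite sequence is rational if it is eventually periodic in both directions. -/
def IsRational (z : ℤ → X) : Prop :=
  ∃ (N p q : ℕ), 0 < p ∧ 0 < q ∧
    (∀ i : ℤ, (N : ℤ) ≤ i → z (i + (p : ℤ)) = z i) ∧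
    (∀ i : ℤ, i ≤ -(N : ℤ) → z (i - (q : ℤ)) = z i)

/-- The inverse transducer of an invertible transducer. -/
noncomputable def invT (T : Transducer X Q) (hX : Nonempty X) : Transducer X Q where
  step := fun y q => T.step (@Function.invFun X X hX (fun x => T.out x q) y) q
  out := fun y q => @Function.invFun X X hX (fun x => T.out x q) y

/-- The product transducer `A*B`. -/
def prodT (T : Transducer X Q) (S : Transducer X R) : Transducer X (Q × R) where
  step := fun x pq => (T.step x pq.1, S.step (T.out x pq.1) pq.2)
  out := fun x pq => S.out (T.out x pq.1) pq.2

/-- The `m`-fold power `A^m`, with state set `Q^m`. -/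
def powT (T : Transducer X Q) : (m : ℕ) → Transducer X (Fin m → Q)
  | 0 => { step := fun _ u => u, out := fun x _ => x }
  | m + 1 =>
    { step := fun x u =>
        Fin.cons (T.step x (u 0)) ((T.powT m).step (T.out x (u 0)) fun i => u i.succ)
      out := fun x u => (T.powT m).out (T.out x (u 0)) fun i => u i.succ }

/-- The restriction of a transducer to its core. -/
def coreT (T : Transducer X Q) : Transducer X {q : Q // T.InCore q} where
  step := fun x q =>
    ⟨T.step x q.1, by
      obtain ⟨Γ, hΓ, h⟩ := q.2
      exact ⟨Γ ++ [x], by simp, fun p => by rw [T.stepW_append, h p]; rfl⟩⟩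
  out := fun x q => T.out x q.1

/-- `Γ_l^P`: the word obtained by passing `Γ` successively through the states in `P`. -/
def iterW (T : Transducer X Q) : List Q → List X → List X
  | [], Γ => Γ
  | p :: P, Γ => T.iterW P (T.outW Γ p)

/-- The list of states `out_i^P` reached when passing `Γ` successively through `P`. -/
def iterOuts (T : Transducer X Q) : List Q → List X → List Q
  | [], _ => []
  | p :: P, Γ => T.stepW Γ p :: T.iterOuts P (T.outW Γ p)

/-- `((t :: Tt), (p :: Tp), Γ)` is a split (forced states computed from the
basepoint state `q0`). -/
def SplitCond (T : Transducer X Q) (q0 : Q) (t p : Q) (Tt Tp : List Q) (Γ : List X) : Prop :=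
  Tt.length = Tp.length ∧
  T.iterOuts (t :: Tt) Γ = T.iterOuts (p :: Tp) Γ ∧
  (∀ i : ℕ, 1 ≤ i → i < (t :: Tt).length →
    T.stepW (T.iterW ((t :: Tt).take i) Γ) q0 = T.stepW (T.iterW ((p :: Tp).take i) Γ) q0) ∧
  T.stepW (T.iterW (t :: Tt) Γ) q0 ≠ T.stepW (T.iterW (p :: Tp) Γ) q0

/-- The bottom of the split `((t :: Tt), (p :: Tp), Γ)` depends only on its top. -/
def DependsOnTop (T : Transducer X Q) (q0 : Q) (t p : Q) (Tt Tp : List Q) (Γ : List X) : Prop :=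
  ∀ U U' : List Q, U.length = Tt.length → U'.length = Tp.length →
    T.iterOuts (t :: U) Γ = T.iterOuts (t :: Tt) Γ ∧
    T.iterOuts (p :: U') Γ = T.iterOuts (p :: Tp) Γ ∧
    T.stepW (T.iterW (t :: U) Γ) q0 = T.stepW (T.iterW (t :: Tt) Γ) q0 ∧
    T.stepW (T.iterW (p :: U') Γ) q0 = T.stepW (T.iterW (p :: Tp) Γ) q0

/-- The edge relation of the graph of bad pairs `G_r(T)` (on unordered pairs of
states, modelled as subsets of `Q`). -/
def BadEdge (T : Transducer X Q) (q0 : Q) (r : ℕ) (v w : Set Q) : Prop :=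
  ∃ (t p : Q) (Tt Tp : List Q) (Γ : List X), Γ.length = r ∧
    T.SplitCond q0 t p Tt Tp Γ ∧ T.DependsOnTop q0 t p Tt Tp Γ ∧
    v = {t, p} ∧
    w = {T.stepW (T.iterW (t :: Tt) Γ) q0, T.stepW (T.iterW (p :: Tp) Γ) q0}

/-- The `r` splitting length of `T`, as an extended natural number (`⊤` if no split
at level `r` exists). -/
noncomputable def splittingLength (T : Transducer X Q) (q0 : Q) (r : ℕ) : ℕ∞ :=
  sInf {L : ℕ∞ | ∃ (t p : Q) (Tt Tp : List Q) (Γ : List X),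
    Γ.length = r ∧ L = ((Tt.length + 1 : ℕ) : ℕ∞) ∧ T.SplitCond q0 t p Tt Tp Γ}

/-- The `i`-th rotation of a word. -/
def rotWord (i : ℕ) (Γ : List X) : List X :=
  Γ.drop (Γ.length - i) ++ Γ.take (Γ.length - i)

/-- A nonempty word is prime if it is not a proper power of a shorter word. -/
def IsPrimeWord (Γ : List X) : Prop :=
  Γ ≠ [] ∧ ∀ (δ : List X) (m : ℕ), 2 ≤ m → Γ ≠ (List.replicate m δ).flatten

/-- The length of the orbit of `Γ` under `f`. -/
noncomputable def orbitLen (f : List X → List X) (Γ : List X) : ℕ :=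
  (Set.range fun m : ℕ => f^[m] Γ).ncard

/-- The minimal `s ≥ 1` such that `f^[s] Γ` is a rotation of `Γ`
(for words of length `k`). -/
noncomputable def sigmaIdx (f : List X → List X) (k : ℕ) (Γ : List X) : ℕ :=
  sInf {s : ℕ | 1 ≤ s ∧ ∃ i < k, f^[s] Γ = rotWord i Γ}

/-- The rotation index attained at the minimal exponent `sigmaIdx`. -/
noncomputable def rhoIdx (f : List X → List X) (k : ℕ) (Γ : List X) : ℕ :=
  sInf {i : ℕ | i < k ∧ f^[sigmaIdx f k Γ] Γ = rotWord i Γ}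

end Transducer

/-- The Cayley machine of a group `G`. -/
def Transducer.cayleyM (G : Type*) [Group G] : Transducer G G where
  step := fun x g => g * x
  out := fun x g => g * x

namespace CayleyPowers

open Transducer

section General

variable {X Q : Type*} (T : Transducer X Q)

/-- ω-equivalence of states, expressed through the letters written after finite words. -/
def OmegaEq (p q : Q) : Prop :=
  ∀ (w : List X) (x : X), T.out x (T.stepW w p) = T.out x (T.stepW w q)

/-- `q` is accessible from `p`. -/
def Reach (p q : Q) : Prop := ∃ w : List X, T.stepW w p = q

variable {T}

theorem omegaEq_of_stateMap_eq {p q : Q} (h : T.stateMap p = T.stateMap q) :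
    OmegaEq T p q := by
  intro w x
  -- any sequence that starts with `w ++ [x]` tests the pair at position `w.length`
  let y : ℕ → X := fun n => (w ++ [x]).getD n x
  have hy : (List.range w.length).map y = w := by
    apply List.ext_getElem
    · simp
    · intro n h1 h2
      simp [y, List.getElem?_append_left h2, h2]
  have hx : y w.length = x := by simp [y]
  have := congrFun (congrFun h y) w.length
  simpa only [stateMap, hy, hx] using this

theorem OmegaEq.stepW {p q : Q} (h : OmegaEq T p q) (w : List X) :
    OmegaEq T (T.stepW w p) (T.stepW w q) := by
  intro w' x
  rw [← stepW_append, ← stepW_append]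
  exact h _ x

theorem Reach.refl (p : Q) : Reach T p p := ⟨[], rfl⟩

theorem Reach.trans {p q r : Q} (h : Reach T p q) (h' : Reach T q r) : Reach T p r := by
  obtain ⟨w, rfl⟩ := h
  obtain ⟨w', rfl⟩ := h'
  exact ⟨w ++ w', stepW_append ..⟩

theorem stepW_replicate (k : ℕ) (x : X) (q : Q) :
    T.stepW (List.replicate k x) q = (T.step x)^[k] q := by
  induction k generalizing q with
  | zero => rfl
  | succ k ih => simpa [List.replicate_succ, Transducer.stepW] using ih _

/-- A letter acting injectively on a finite state set is undone, uniformly in the state, by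
reading a power of the same letter. -/
theorem exists_return [Finite Q] {x : X} (h : Function.Injective (T.step x)) :
    ∃ w : List X, ∀ q, T.stepW w (T.step x q) = q := by
  let e : Equiv.Perm Q := Equiv.ofBijective _ (Finite.injective_iff_bijective.1 h)
  have hpos : 0 < orderOf e := orderOf_pos e
  refine ⟨List.replicate (orderOf e - 1) x, fun q => ?_⟩
  have h1 : (T.step x)^[orderOf e] q = q := by
    have h2 : (e ^ orderOf e) q = q := by rw [pow_orderOf_eq_one]; rfl
    rwa [Equiv.Perm.coe_pow] at h2
  rw [stepW_replicate, ← Function.iterate_succ_apply, Nat.succ_eq_add_one,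
    Nat.sub_add_cancel hpos]
  exact h1

theorem Reach.symm [Finite Q] (hT : ∀ x, Function.Injective (T.step x)) {p q : Q}
    (h : Reach T p q) : Reach T q p := by
  obtain ⟨w, rfl⟩ := h
  induction w generalizing p with
  | nil => exact Reach.refl _
  | cons x w ih =>
    obtain ⟨w', hw'⟩ := exists_return (hT x)
    exact (ih (p := T.step x p)).trans ⟨w', hw' p⟩

end General

variable {G : Type*} [Group G]

theorem step_zero {m : ℕ} (x : G) (u : Fin m → G) (i : Fin m) (hi : i.val = 0) :
    ((cayleyM G).powT m).step x u i = u i * x := by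
  cases m with
  | zero => exact i.elim0
  | succ m =>
    obtain rfl : i = 0 := Fin.ext hi
    rfl

theorem step_succ {m : ℕ} (x : G) (u : Fin m → G) (i j : Fin m) (hij : j.val = i.val + 1) :
    ((cayleyM G).powT m).step x u j = u j * ((cayleyM G).powT m).step x u i := by
  induction m generalizing x with
  | zero => exact i.elim0
  | succ m ih =>
    cases j using Fin.cases with
    | zero => simp at hij
    | succ j =>
      cases i using Fin.cases with
      | zero =>
        have hj : j.val = 0 := by simpa using hij
        exact step_zero _ (fun i => u i.succ) j hj
      | succ i =>
        exact ih _ (fun i => u i.succ) i j (by simpa using hij)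

/-- The letter written is the last coordinate of the next state. -/
theorem out_eq {m : ℕ} (x : G) (u : Fin m → G) (i : Fin m) (hi : i.val + 1 = m) :
    ((cayleyM G).powT m).out x u = ((cayleyM G).powT m).step x u i := by
  induction m generalizing x with
  | zero => exact i.elim0
  | succ m ih =>
    cases i using Fin.cases with
    | zero =>
      obtain rfl : m = 0 := by simpa using hi.symm
      rfl
    | succ i => exact ih _ (fun i => u i.succ) i (by simpa using hi)

theorem step_injective {m : ℕ} (x : G) :
    Function.Injective (((cayleyM G).powT m).step x) := by
  intro u v h
  funext j
  have hj := congrFun h j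
  rcases Nat.eq_zero_or_pos j.val with h0 | h0
  · rw [step_zero x u j h0, step_zero x v j h0] at hj
    exact mul_right_cancel hj
  · let i : Fin m := ⟨j.val - 1, by omega⟩
    have hij : j.val = i.val + 1 := by simp only [i]; omega
    rw [step_succ x u i j hij, step_succ x v i j hij, h] at hj
    exact mul_right_cancel hj

theorem step_surjective [Finite G] {m : ℕ} (x : G) :
    Function.Surjective (((cayleyM G).powT m).step x) :=
  Finite.injective_iff_surjective.1 (step_injective x)

/-- Every ω-equivalent pair arises by reading `1` from an ω-equivalent pair. -/
theorem OmegaEq.exists_pred [Finite G] {m : ℕ} {u v : Fin m → G}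
    (h : OmegaEq ((cayleyM G).powT m) u v) :
    ∃ u' v', OmegaEq ((cayleyM G).powT m) u' v' ∧
      ((cayleyM G).powT m).step 1 u' = u ∧ ((cayleyM G).powT m).step 1 v' = v := by
  obtain ⟨u', rfl⟩ := step_surjective 1 u
  obtain ⟨v', rfl⟩ := step_surjective 1 v
  obtain ⟨w, hw⟩ := exists_return (step_injective (G := G) (m := m) 1)
  have := h.stepW w
  rw [hw, hw] at this
  exact ⟨u', v', this, rfl, rfl⟩

theorem OmegaEq.eq [Finite G] {m : ℕ} {u v : Fin m → G}
    (h : OmegaEq ((cayleyM G).powT m) u v) : u = v := by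
  -- descend from the last coordinate, for all ω-equivalent pairs simultaneously
  have key : ∀ (k : ℕ) (i : Fin m), i.val + 1 + k = m → ∀ u v : Fin m → G,
      OmegaEq ((cayleyM G).powT m) u v → u i = v i := by
    intro k
    induction k with
    | zero =>
      intro i hi u v huv
      obtain ⟨u', v', h', rfl, rfl⟩ := OmegaEq.exists_pred huv
      rw [← out_eq _ _ i hi, ← out_eq _ _ i hi]
      exact h' [] 1
    | succ k ih =>
      intro i hi u v huv
      obtain ⟨u', v', h', rfl, rfl⟩ := OmegaEq.exists_pred huv
      let j : Fin m := ⟨i.val + 1, by omega⟩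
      have hj : j.val + 1 + k = m := by simp only [j]; omega
      have h1 := ih j hj _ _ huv
      have h2 := ih j hj _ _ h'
      rw [step_succ 1 u' i j rfl, step_succ 1 v' i j rfl, h2] at h1
      exact mul_left_cancel h1
  funext i
  exact key (m - (i.val + 1)) i (by omega) u v h

theorem reach_update [Finite G] {m : ℕ} (k : ℕ) (i : Fin m) (hi : i.val = k)
    (u : Fin m → G) (a : G) :
    Reach ((cayleyM G).powT m) u (Function.update u i a) := by
  have hinj := step_injective (G := G) (m := m)
  have hstep : ∀ (x : G) (u : Fin m → G),
      Reach ((cayleyM G).powT m) u (((cayleyM G).powT m).step x u) :=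
    fun x u => ⟨[x], rfl⟩
  induction k generalizing i u a with
  | zero =>
    -- `a⁻¹ * u i` is the letter making the two successors coincide
    have h : ((cayleyM G).powT m).step (a⁻¹ * u i) (Function.update u i a) =
        ((cayleyM G).powT m).step 1 u := by
      have h' : ∀ (n : ℕ) (j : Fin m), j.val = n →
          ((cayleyM G).powT m).step (a⁻¹ * u i) (Function.update u i a) j =
            ((cayleyM G).powT m).step 1 u j := by
        intro n
        induction n with
        | zero =>
          intro j hj
          obtain rfl : j = i := Fin.ext (hj.trans hi.symm)
          rw [step_zero _ _ _ hj, step_zero _ _ _ hj]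
          simp
        | succ n ih =>
          intro j hj
          let j' : Fin m := ⟨n, by omega⟩
          have hne : j ≠ i := by rintro rfl; omega
          rw [step_succ _ _ j' j hj, step_succ _ _ j' j hj, ih j' rfl,
            Function.update_of_ne hne]
      funext j
      exact h' _ j rfl
    exact (hstep 1 u).trans (h ▸ (hstep _ _).symm hinj)
  | succ k ih =>
    let i' : Fin m := ⟨k, by omega⟩
    have hi' : i.val = i'.val + 1 := hi
    -- changing coordinate `k` of the successor `P` to `a⁻¹ * P i` corresponds to a state `w`
    -- with `w i = a`
    obtain ⟨w, hw⟩ := step_surjective 1 (Function.update (((cayleyM G).powT m).step 1 u) i'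
      (a⁻¹ * ((cayleyM G).powT m).step 1 u i))
    have huw : Reach ((cayleyM G).powT m) u w :=
      ((hstep 1 u).trans (ih i' rfl _ _)).trans (hw ▸ (hstep 1 w).symm hinj)
    have hii' : i ≠ i' := by intro h; rw [h] at hi'; omega
    have hwv : Function.update w i' (u i') = Function.update u i a := by
      funext j
      have hj := congrFun hw j
      by_cases h1 : j = i'
      · subst h1
        rw [Function.update_self, Function.update_of_ne hii'.symm]
      rw [Function.update_of_ne h1] at hj ⊢
      by_cases h2 : j = i
      · subst h2
        rw [step_succ 1 w i' j hi', hw, Function.update_self] at hj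
        rw [Function.update_self]
        have : (w j * a⁻¹) * ((cayleyM G).powT m).step 1 u j
            = 1 * ((cayleyM G).powT m).step 1 u j := by
          rw [one_mul, mul_assoc]; exact hj
        exact mul_inv_eq_one.1 (mul_right_cancel this)
      rw [Function.update_of_ne h2]
      rcases Nat.eq_zero_or_pos j.val with h0 | h0
      · rw [step_zero _ _ _ h0, step_zero _ _ _ h0] at hj
        exact mul_right_cancel hj
      · let j' : Fin m := ⟨j.val - 1, by omega⟩
        have hjj' : j.val = j'.val + 1 := by simp only [j']; omega
        -- the predecessor of `j` is not the changed coordinate, because `j ≠ i`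
        have hne : j' ≠ i' := by
          intro h
          apply h2
          apply Fin.ext
          rw [hjj', hi', h]
        rw [step_succ _ _ j' j hjj', step_succ _ _ j' j hjj', hw,
          Function.update_of_ne hne] at hj
        exact mul_right_cancel hj
    exact hwv ▸ huw.trans (ih i' rfl w (u i'))

theorem reach_all [Finite G] {m : ℕ} (u v : Fin m → G) :
    Reach ((cayleyM G).powT m) u v := by
  have key : ∀ n : ℕ, n ≤ m → Reach ((cayleyM G).powT m) u
      (fun i => if i.val < n then v i else u i) := by
    intro n
    induction n with
    | zero => intro _; simpa using Reach.refl u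
    | succ n ih =>
      intro hn
      have h := (ih (by omega)).trans (reach_update n ⟨n, hn⟩ rfl _ (v ⟨n, hn⟩))
      convert h using 1
      funext i
      by_cases hi : i = ⟨n, hn⟩
      · subst hi; simp
      · have : i.val ≠ n := fun h => hi (Fin.ext h)
        rw [Function.update_of_ne hi]
        have h' : i.val < n + 1 ↔ i.val < n := by omega
        simp only [h']
  simpa using key m le_rfl

end CayleyPowers

/-- For a finite group `G` and `m ≥ 1`: (i) distinct states of the
`m`-fold power of the Cayley machine `C(G)` induce distinct maps on `G^ℕ`; (ii) every
state of `C(G)^m` is accessible from every other state; consequently the minimal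
transducer representing `C(G)^m` has exactly `|G|^m` states. -/
theorem cayley_machine_powers
    (G : Type*) [Group G] [Fintype G] (m : ℕ) (hm : 1 ≤ m) :
    (∀ u v : Fin m → G, u ≠ v →
      ((Transducer.cayleyM G).powT m).stateMap u ≠ ((Transducer.cayleyM G).powT m).stateMap v) ∧
    (∀ u v : Fin m → G, ∃ w : List G, ((Transducer.cayleyM G).powT m).stepW w u = v) ∧
    (Set.range ((Transducer.cayleyM G).powT m).stateMap).ncard = Fintype.card G ^ m := by
  have hinj : Function.Injective ((Transducer.cayleyM G).powT m).stateMap := fun u v h =>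
    CayleyPowers.OmegaEq.eq (CayleyPowers.omegaEq_of_stateMap_eq h)
  refine ⟨fun u v huv h => huv (hinj h), CayleyPowers.reach_all, ?_⟩
  rw [← Set.image_univ, Set.ncard_image_of_injective _ hinj, Set.ncard_univ]
  simp [Nat.card_eq_fintype_card]
end

section
/- Let A be a core synchronous transducer on X_n synchronizing at level k, invertible, with every state a homeomorphism state, and suppose the inverse transducer A^{−1} is not synchronizing at any level. Then: (i) there exists l with 0 < l ≤ k(|Q_A|² + 1) such that \overline{A}_l is not a bijection of X_n^l; (ii) f_A : X_n^ℤ → X_n^ℤ is not injective; (iii) there exist nonempty words Δ, Λ ∈ X_n^+ of equal length such that Δ is not a rotation of Λ and the periodic points of X_n^ℤ determined by Δ and by Λ (the element z with z_{j|Δ|+i} = Δ_i for all j ∈ ℤ and 0 ≤ i < |Δ|, and likewise for Λ) have the same image under f_A. -/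
namespace Transducer

/-! ### Loops of a synchronizing transducer and of its inverse -/

section Words

variable {X Q : Type*}

theorem stepW_sync_of_le {T : Transducer X Q} {k : ℕ} (h : T.Synchronizing k) (Γ : List X)
    (hk : k ≤ Γ.length) (p q : Q) : T.stepW Γ p = T.stepW Γ q := by
  rw [← List.take_append_drop (Γ.length - k) Γ, stepW_append, stepW_append]
  exact h _ (by simp; omega) _ _

/-- A nonempty word loops at no more than one state of a synchronizing transducer. -/
theorem loop_unique {T : Transducer X Q} {k : ℕ} (h : T.Synchronizing k) {Γ : List X}
    (hΓ : Γ ≠ []) {p q : Q} (hp : T.stepW Γ p = p) (hq : T.stepW Γ q = q) : p = q := by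
  have key : ∀ r : Q, T.stepW Γ r = r → ∀ m : ℕ,
      T.stepW (List.replicate m Γ).flatten r = r := by
    intro r hr m
    induction m with
    | zero => rfl
    | succ m ih => rw [List.replicate_succ, List.flatten_cons, stepW_append, hr, ih]
  rw [← key p hp k, ← key q hq k]
  apply stepW_sync_of_le h
  have : 0 < Γ.length := List.length_pos_iff.mpr hΓ
  simpa using Nat.le_mul_of_pos_right k this

theorem outW_length (T : Transducer X Q) (Γ : List X) (q : Q) :
    (T.outW Γ q).length = Γ.length := by
  induction Γ generalizing q with
  | nil => rfl
  | cons x Γ ih => simp [outW, ih]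

theorem out_invT_out {T : Transducer X Q} (hT : T.Invertible) (hX : Nonempty X) (y : X) (q : Q) :
    T.out ((T.invT hX).out y q) q = y :=
  Function.invFun_eq ((hT q).2 y)

theorem outW_invT_outW {T : Transducer X Q} (hT : T.Invertible) (hX : Nonempty X) (Γ : List X)
    (q : Q) : T.outW ((T.invT hX).outW Γ q) q = Γ := by
  induction Γ generalizing q with
  | nil => rfl
  | cons y Γ ih =>
    simp only [outW, out_invT_out hT hX]
    exact congrArg _ (ih _)

theorem stepW_invT_outW (T : Transducer X Q) (hX : Nonempty X) (Γ : List X)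
    (q : Q) : T.stepW ((T.invT hX).outW Γ q) q = (T.invT hX).stepW Γ q := by
  induction Γ generalizing q with
  | nil => rfl
  | cons y Γ ih => exact ih _

/-- A transducer that is not synchronizing at level `|Q|²` has a short word looping at two
distinct states. -/
theorem exists_double_loop [Fintype Q] (T : Transducer X Q)
    (h : ¬ T.Synchronizing (Fintype.card Q ^ 2)) :
    ∃ (Γ : List X) (p q : Q), Γ ≠ [] ∧ Γ.length ≤ Fintype.card Q ^ 2 ∧ p ≠ q ∧
      T.stepW Γ p = p ∧ T.stepW Γ q = q := by
  unfold Synchronizing at h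
  push Not at h
  obtain ⟨W, hW, p, q, hpq⟩ := h
  let r : Fin (Fintype.card Q ^ 2 + 1) → Q × Q := fun i =>
    (T.stepW (W.take i) p, T.stepW (W.take i) q)
  obtain ⟨i, j, hij, hr⟩ : ∃ i j, i < j ∧ r i = r j := by
    obtain ⟨i, j, hij, hr⟩ := Fintype.exists_ne_map_eq_of_card_lt r (by simp [pow_two])
    rcases lt_or_gt_of_ne hij with h' | h'
    · exact ⟨i, j, h', hr⟩
    · exact ⟨j, i, h', hr.symm⟩
  have hi : (i : ℕ) < j := hij
  have hj : (j : ℕ) ≤ Fintype.card Q ^ 2 := by omega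
  have hsplit : W.take j = W.take i ++ (W.drop i).take (j - i) := by
    rw [← List.take_add]; congr 1; omega
  have hlen : ((W.drop i).take (j - i)).length = j - i := by simp; omega
  have hr' := Prod.mk.inj hr
  refine ⟨(W.drop i).take (j - i), T.stepW (W.take i) p, T.stepW (W.take i) q, ?_, ?_, ?_, ?_, ?_⟩
  · rw [← List.length_pos_iff]; omega
  · omega
  · intro he
    apply hpq
    rw [← List.take_append_drop i W, stepW_append, stepW_append, he]
  · rw [← stepW_append, ← hsplit]; exact hr'.1.symm
  · rw [← stepW_append, ← hsplit]; exact hr'.2.symm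

end Words

/-! ### Periodic bi-infinite runs -/

section BiInfinite

variable {X Q : Type*}

/-- The shift by `j` on bi-infinite sequences. -/
def shiftZ (j : ℤ) (x : ℤ → X) : ℤ → X := fun i => x (i + j)

/-- In `zmap` the list `List.range k` is cast to a list of integers before the letters are read;
here the letters are indexed by natural numbers. -/
theorem zmap_apply (T : Transducer X Q) (k : ℕ) (q0 : Q) (x : ℤ → X) (i : ℤ) :
    T.zmap k q0 x i = T.out (x i)
      (T.stepW ((List.range k).map fun j : ℕ => x (i - (k : ℤ) + (j : ℤ))) q0) := by
  have (l : List ℕ) : (do let a ← l; pure (a : ℤ)) = l.map fun a : ℕ => (a : ℤ) := by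
    induction l with
    | nil => rfl
    | cons b l ih => simpa using ih
  simp only [zmap, this, List.map_map]
  rfl

theorem zmap_shiftZ (T : Transducer X Q) (k : ℕ) (q0 : Q) (j : ℤ) (x : ℤ → X) :
    T.zmap k q0 (shiftZ j x) = shiftZ j (T.zmap k q0 x) := by
  funext i
  simp only [zmap_apply, shiftZ]
  congr 4
  funext t
  congr 1
  ring

/-- A bi-infinite run of `T` reading `x` is determined by `x`: its states are the forced ones. -/
theorem run_eq {T : Transducer X Q} {k : ℕ} (h : T.Synchronizing k) (q0 : Q) {x : ℤ → X}
    {s : ℤ → Q} (hs : ∀ i, s (i + 1) = T.step (x i) (s i)) (i : ℤ) :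
    T.stepW ((List.range k).map fun j : ℕ => x (i - (k : ℤ) + (j : ℤ))) q0 = s i := by
  have key : ∀ (m : ℕ) (a : ℤ),
      T.stepW ((List.range m).map fun j : ℕ => x (a + (j : ℤ))) (s a) = s (a + m) := by
    intro m a
    induction m with
    | zero => simp [stepW]
    | succ m ih =>
      rw [List.range_succ, List.map_append, stepW_append, ih]
      simp only [List.map_cons, List.map_nil, stepW]
      rw [← hs]
      push_cast
      ring_nf
  rw [h _ (by simp) q0 (s (i - k)), key]
  congr 1
  ring

/-- A loop of `T` unrolls to a periodic bi-infinite run. -/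
theorem exists_periodic_run (T : Transducer X Q) {Γ : List X} (hΓ : Γ ≠ []) :
    ∃ g : ℤ → X, (∀ i, g (i + Γ.length) = g i) ∧ ∀ p : Q, T.stepW Γ p = p →
      ∃ s : ℤ → Q, s 0 = p ∧ (∀ i, s (i + Γ.length) = s i) ∧
        ∀ i, s (i + 1) = T.step (g i) (s i) := by
  have hl : 0 < Γ.length := List.length_pos_iff.mpr hΓ
  have hm : ∀ i : ℤ, 0 ≤ i % Γ.length ∧ i % Γ.length < Γ.length := fun i =>
    ⟨Int.emod_nonneg _ (by omega), Int.emod_lt_of_pos _ (by omega)⟩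
  refine ⟨fun i => Γ[(i % Γ.length).toNat]'(by have := hm i; omega), fun i => by simp, ?_⟩
  intro p hp
  refine ⟨fun i => T.stepW (Γ.take (i % Γ.length).toNat) p, by simp [stepW],
    fun i => by simp, fun i => ?_⟩
  have h1 := hm i
  have hlt : (i % Γ.length).toNat < Γ.length := by omega
  have hstep : T.stepW (Γ.take ((i % Γ.length).toNat + 1)) p
      = T.step (Γ[(i % Γ.length).toNat]) (T.stepW (Γ.take (i % Γ.length).toNat) p) := by
    rw [List.take_add_one, stepW_append, List.getElem?_eq_getElem hlt]
    rfl
  rw [← hstep]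
  have hadd : (i + 1) % (Γ.length : ℤ) = (i % Γ.length + 1) % Γ.length := by
    rw [Int.emod_add_emod]
  beta_reduce
  rcases eq_or_ne (i % (Γ.length : ℤ) + 1) Γ.length with he | he
  · -- the run closes up: the initial segment read so far is all of `Γ`
    rw [hadd, he, Int.emod_self]
    have : (i % (Γ.length : ℤ)).toNat + 1 = Γ.length := by omega
    rw [this, List.take_length, hp]
    rfl
  · rw [hadd, Int.emod_eq_of_lt (by omega) (by omega)]
    congr 2
    omega

/-- Two loops of the inverse labelled by the same word give two distinct periodic points with the
same image. -/
theorem exists_periodic_collision {T : Transducer X Q} {k : ℕ} (h : T.Synchronizing k) (q0 : Q)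
    (hT : T.Invertible) (hX : Nonempty X) {Γ : List X} (hΓ : Γ ≠ []) {p q : Q} (hpq : p ≠ q)
    (hp : (T.invT hX).stepW Γ p = p) (hq : (T.invT hX).stepW Γ q = q) :
    ∃ x y : ℤ → X, shiftZ Γ.length x = x ∧ shiftZ Γ.length y = y ∧ x ≠ y ∧
      T.zmap k q0 x = T.zmap k q0 y := by
  obtain ⟨g, hg, H⟩ := (T.invT hX).exists_periodic_run hΓ
  have key : ∀ r : Q, (T.invT hX).stepW Γ r = r → ∃ x : ℤ → X, shiftZ Γ.length x = x ∧
      T.stepW ((List.range k).map fun j : ℕ => x (0 - (k : ℤ) + (j : ℤ))) q0 = r ∧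
      T.zmap k q0 x = g := by
    intro r hr
    obtain ⟨s, hs0, hsl, hs⟩ := H r hr
    have hrun : ∀ i, s (i + 1) = T.step ((T.invT hX).out (g i) (s i)) (s i) := hs
    refine ⟨fun i => (T.invT hX).out (g i) (s i), ?_, ?_, ?_⟩
    · funext i; simp only [shiftZ, hg, hsl]
    · rw [run_eq h q0 hrun 0, hs0]
    · funext i
      rw [zmap_apply, run_eq h q0 hrun i, out_invT_out hT hX]
  obtain ⟨x, hx, hx0, hxg⟩ := key p hp
  obtain ⟨y, hy, hy0, hyg⟩ := key q hq
  exact ⟨x, y, hx, hy, fun he => hpq (by rw [← hx0, ← hy0, he]), hxg.trans hyg.symm⟩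

end BiInfinite

/-! ### Shift-commuting maps on periodic sequences -/

section Shift

variable {X : Type*}

theorem shiftZ_zero (x : ℤ → X) : shiftZ 0 x = x := by
  funext i; simp [shiftZ]

theorem shiftZ_shiftZ (a b : ℤ) (x : ℤ → X) : shiftZ a (shiftZ b x) = shiftZ (a + b) x := by
  funext i; simp [shiftZ, add_assoc]

theorem shiftZ_eq_of_dvd {a b : ℤ} (h : a ∣ b) {x : ℤ → X} (hx : shiftZ a x = x) :
    shiftZ b x = x := by
  obtain ⟨c, rfl⟩ := h
  have hp : Function.Periodic x a := fun i => congrFun hx i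
  funext i
  simpa [shiftZ, mul_comm] using hp.int_mul c i

theorem shiftZ_gcd {a b : ℤ} {x : ℤ → X} (ha : shiftZ a x = x) (hb : shiftZ b x = x) :
    shiftZ (Int.gcd a b) x = x := by
  rw [Int.gcd_eq_gcd_ab, ← shiftZ_shiftZ, shiftZ_eq_of_dvd (Dvd.intro _ rfl) hb,
    shiftZ_eq_of_dvd (Dvd.intro _ rfl) ha]

theorem finite_periodic [Finite X] {d : ℕ} (hd : 0 < d) :
    Finite {x : ℤ → X // shiftZ d x = x} := by
  refine Finite.of_injective (fun x (i : Fin d) => x.1 (i : ℕ)) ?_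
  rintro ⟨x, hx⟩ ⟨y, hy⟩ hxy
  apply Subtype.ext
  funext i
  have hm : ∀ z : ℤ → X, shiftZ d z = z → z i = z (i % d) := by
    intro z hz
    have := congrFun (shiftZ_eq_of_dvd (b := d * (i / d)) (Dvd.intro _ rfl) hz) (i % d)
    rw [← this, shiftZ, Int.emod_add_mul_ediv]
  have h0 := Int.emod_nonneg i (b := (d : ℤ)) (by omega)
  have h1 := Int.emod_lt_of_pos i (b := (d : ℤ)) (by omega)
  have := congrFun hxy ⟨(i % d).toNat, by omega⟩
  simp only [Int.toNat_of_nonneg h0] at this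
  change x i = y i
  rw [hm x hx, hm y hy, this]

/-- If a shift-commuting map separates shift orbits of points of period `d`, then every point of
period `d` is an image of one: the induced map on the finite set of orbits is a bijection. -/
theorem exists_periodic_preimage [Finite X] {f : (ℤ → X) → ℤ → X}
    (hf : ∀ j x, f (shiftZ j x) = shiftZ j (f x)) {d : ℕ} (hd : 0 < d)
    (H : ∀ x y, shiftZ d x = x → shiftZ d y = y → f x = f y → ∃ j, x = shiftZ j y)
    {z : ℤ → X} (hz : shiftZ d z = z) : ∃ x, shiftZ d x = x ∧ f x = z := by
  have hcomm : ∀ (j : ℤ) (x : ℤ → X), shiftZ d x = x → shiftZ d (shiftZ j x) = shiftZ j x := by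
    intro j x hx
    rw [shiftZ_shiftZ, add_comm, ← shiftZ_shiftZ, hx]
  let S : Setoid {x : ℤ → X // shiftZ d x = x} :=
    { r := fun x y => ∃ j, x.1 = shiftZ j y.1
      iseqv :=
        { refl := fun x => ⟨0, (shiftZ_zero _).symm⟩
          symm := by
            rintro x y ⟨j, hj⟩
            exact ⟨-j, by rw [hj, shiftZ_shiftZ, neg_add_cancel, shiftZ_zero]⟩
          trans := by
            rintro x y z ⟨j, hj⟩ ⟨i, hi⟩
            exact ⟨j + i, by rw [hj, hi, shiftZ_shiftZ]⟩ } }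
  let F : {x : ℤ → X // shiftZ d x = x} → {x : ℤ → X // shiftZ d x = x} := fun x =>
    ⟨f x.1, by rw [← hf, x.2]⟩
  let G : Quotient S → Quotient S := Quotient.map F (by
    rintro x y ⟨j, hj⟩
    exact ⟨j, by rw [← hf, ← hj]⟩)
  have := finite_periodic (X := X) hd
  have hG : Function.Injective G := by
    intro a b
    induction a using Quotient.inductionOn
    induction b using Quotient.inductionOn
    rename_i x y
    intro hxy
    obtain ⟨j, hj⟩ := Quotient.exact hxy
    have hj' : f x.1 = f (shiftZ j y.1) := by rw [hf]; exact hj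
    obtain ⟨i, hi⟩ := H x.1 (shiftZ j y.1) x.2 (hcomm _ _ y.2) hj'
    exact Quotient.sound ⟨i + j, by rw [hi, shiftZ_shiftZ]⟩
  obtain ⟨a, ha⟩ := Finite.injective_iff_surjective.mp hG (Quotient.mk S ⟨z, hz⟩)
  induction a using Quotient.inductionOn
  rename_i x
  obtain ⟨j, hj⟩ := Quotient.exact ha
  have hj' : f x.1 = shiftZ j z := hj
  exact ⟨shiftZ (-j) x.1, hcomm _ _ x.2, by
    rw [hf, hj', shiftZ_shiftZ, neg_add_cancel, shiftZ_zero]⟩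

/-- A shift-commuting map identifying two distinct periodic points identifies two periodic points
in distinct shift orbits. -/
theorem exists_collision_not_shift [Finite X] {f : (ℤ → X) → ℤ → X}
    (hf : ∀ j x, f (shiftZ j x) = shiftZ j (f x)) {l : ℕ} (hl : 0 < l) {x y : ℤ → X}
    (hx : shiftZ l x = x) (hy : shiftZ l y = y) (hxy : x ≠ y) (hfxy : f x = f y) :
    ∃ m : ℕ, 0 < m ∧ ∃ u v, shiftZ m u = u ∧ shiftZ m v = v ∧ f u = f v ∧
      ¬ ∃ j, u = shiftZ j v := by
  by_contra hcon
  have H : ∀ m : ℕ, 0 < m → ∀ u v, shiftZ m u = u → shiftZ m v = v → f u = f v →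
      ∃ j, u = shiftZ j v := by
    intro m hm u v hu hv huv
    by_contra hj
    exact hcon ⟨m, hm, u, v, hu, hv, huv, hj⟩
  obtain ⟨j, hj⟩ := H l hl y x hy hx hfxy.symm
  have hd : 0 < Int.gcd l j := Int.gcd_pos_of_ne_zero_left _ (by omega)
  have hz : shiftZ (Int.gcd l j) (f x) = f x :=
    shiftZ_gcd (by rw [← hf, hx]) (by rw [← hf, ← hj, hfxy])
  obtain ⟨w, hw, hfw⟩ := exists_periodic_preimage hf hd (H _ hd) hz
  obtain ⟨i, hi⟩ := H l hl x w hx (shiftZ_eq_of_dvd (Int.gcd_dvd_left ..) hw) hfw.symm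
  -- `x` inherits the period `gcd l j` of `w`, hence is fixed by the shift by `j`
  have hxd : shiftZ (Int.gcd l j) x = x := by
    rw [hi, shiftZ_shiftZ, add_comm, ← shiftZ_shiftZ, hw]
  exact hxy (by rw [hj, shiftZ_eq_of_dvd (Int.gcd_dvd_right ..) hxd])

/-- The word `x_0 ⋯ x_{m-1}` of a bi-infinite sequence. -/
def window (m : ℕ) (x : ℤ → X) : List X := List.ofFn fun i : Fin m => x (i : ℕ)

theorem window_length (m : ℕ) (x : ℤ → X) : (window m x).length = m := by simp [window]

theorem periodic_apply_window {m : ℕ} {x : ℤ → X} (hx : shiftZ m x = x) (j : ℤ) (i : ℕ)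
    (hi : i < (window m x).length) :
    x (j * ((window m x).length : ℤ) + (i : ℤ)) = (window m x).get ⟨i, hi⟩ := by
  have h := congrFun (shiftZ_eq_of_dvd (b := j * m) (Dvd.intro_left _ rfl) hx) i
  simp only [window, List.length_ofFn, List.get_eq_getElem, List.getElem_ofFn]
  rw [← h, shiftZ, add_comm]

/-- If the words of two sequences of period `m` are rotations of each other, the sequences are
shifts of each other. -/
theorem shift_of_rotWord {m : ℕ} {u v : ℤ → X} (hu : shiftZ m u = u) (hv : shiftZ m v = v)
    (hm : 0 < m) {i : ℕ} (hi : i < m) (h : window m u = rotWord i (window m v)) :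
    u = shiftZ (-i) v := by
  funext t
  have h0 := Int.emod_nonneg t (b := (m : ℤ)) (by omega)
  have h1 := Int.emod_lt_of_pos t (b := (m : ℤ)) (by omega)
  obtain ⟨r, hr⟩ := Int.eq_ofNat_of_zero_le h0
  have hred : ∀ z : ℤ → X, shiftZ m z = z → ∀ s : ℤ, z (t + s) = z (r + s) := by
    intro z hz s
    have := congrFun (shiftZ_eq_of_dvd (b := m * (t / m)) (Dvd.intro _ rfl) hz) (r + s)
    rw [← this, shiftZ]
    congr 1
    have := Int.emod_add_mul_ediv t m
    omega
  have hrm : r < m := by omega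
  have hget : (window m u)[r]? = (rotWord i (window m v))[r]? := by rw [h]
  have hu' := hred u hu 0
  simp only [add_zero] at hu'
  rw [shiftZ, hu', hred v hv]
  simp only [rotWord, window_length] at hget
  by_cases hri : r < i
  · rw [List.getElem?_append_left (by simp [window_length]; omega), List.getElem?_drop] at hget
    have hlt : m - i + r < m := by omega
    simp only [window, List.getElem?_ofFn, hrm, hlt, dif_pos, Option.some.injEq] at hget
    rw [hget, ← congrFun hv (r + -i), shiftZ]
    congr 1
    omega
  · rw [List.getElem?_append_right (by simp [window_length]; omega), List.getElem?_take_of_lt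
      (by simp [window_length]; omega)] at hget
    have hlt : r - (m - (m - i)) < m := by omega
    simp only [window, List.getElem?_ofFn, hrm, hlt, dif_pos, Option.some.injEq,
      List.length_drop, List.length_ofFn] at hget
    rw [hget]
    congr 1
    omega

end Shift

end Transducer

/-- Let `A` be a core synchronous transducer on `X_n` synchronizing at
level `k`, invertible, with every state a homeomorphism state, whose inverse transducer
is not synchronizing at any level.  Then: (i) some `\overline{A}_l` with
`0 < l ≤ k(|Q_A|² + 1)` is not a bijection of `X_n^l`; (ii) `f_A` is not injective;
(iii) there are nonempty words `Δ, Λ` of equal length, `Δ` not a rotation of `Λ`, whose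
associated periodic bi-infinite sequences have the same image under `f_A`. -/
theorem one_way_synchronizing_not_injective
    (n : ℕ) (hn : 2 ≤ n) {Q : Type*} [Fintype Q]
    (A : Transducer (Fin n) Q) (k : ℕ) (q0 : Q)
    (hcore : A.IsCore) (hsync : A.Synchronizing k)
    (hinv : A.Invertible) (hhomeo : A.AllHomeo)
    (hnotsync : ¬ ∃ l : ℕ, (A.invT ⟨⟨0, by omega⟩⟩).Synchronizing l)
    (barA : List (Fin n) → List (Fin n))
    (hbarA : ∀ Γ : List (Fin n), Γ ≠ [] →
      ∃ q : Q, A.stepW Γ q = q ∧ barA Γ = A.outW Γ q) :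
    (∃ l : ℕ, 0 < l ∧ l ≤ k * (Fintype.card Q ^ 2 + 1) ∧
      ¬ Set.BijOn barA {Γ | Γ.length = l} {Γ | Γ.length = l}) ∧
    (¬ Function.Injective (A.zmap k q0)) ∧
    (∃ Δ Λ : List (Fin n), Δ ≠ [] ∧ Λ ≠ [] ∧ Δ.length = Λ.length ∧
      (¬ ∃ i : ℕ, i < Λ.length ∧ Δ = Transducer.rotWord i Λ) ∧
      ∃ zΔ zΛ : ℤ → Fin n,
        (∀ j : ℤ, ∀ i : ℕ, (hi : i < Δ.length) →
          zΔ (j * (Δ.length : ℤ) + (i : ℤ)) = Δ.get ⟨i, hi⟩) ∧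
        (∀ j : ℤ, ∀ i : ℕ, (hi : i < Λ.length) →
          zΛ (j * (Λ.length : ℤ) + (i : ℤ)) = Λ.get ⟨i, hi⟩) ∧
        A.zmap k q0 zΔ = A.zmap k q0 zΛ) := by
  have hX : Nonempty (Fin n) := ⟨⟨0, by omega⟩⟩
  obtain ⟨Γ, p, q, hΓ, hΓl, hpq, hp, hq⟩ :=
    (A.invT hX).exists_double_loop fun h => hnotsync ⟨_, h⟩
  have hl : 0 < Γ.length := List.length_pos_iff.mpr hΓ
  have hk : 0 < k := by
    rcases Nat.eq_zero_or_pos k with rfl | h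
    · exact absurd (hsync [] rfl p q) hpq
    · exact h
  obtain ⟨x, y, hx, hy, hxy, hfxy⟩ :=
    Transducer.exists_periodic_collision hsync q0 hinv hX hΓ hpq hp hq
  refine ⟨⟨Γ.length, hl, ?_, ?_⟩, fun hinj => hxy (hinj hfxy), ?_⟩
  · calc Γ.length ≤ Fintype.card Q ^ 2 + 1 := by omega
      _ ≤ k * (Fintype.card Q ^ 2 + 1) := Nat.le_mul_of_pos_left _ hk
  · intro hbij
    have hbar : ∀ r, (A.invT hX).stepW Γ r = r →
        (A.invT hX).outW Γ r ≠ [] ∧ A.stepW ((A.invT hX).outW Γ r) r = r ∧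
          barA ((A.invT hX).outW Γ r) = Γ := by
      intro r hr
      have hne : (A.invT hX).outW Γ r ≠ [] := by
        rw [← List.length_pos_iff, Transducer.outW_length]; exact hl
      have hloop : A.stepW ((A.invT hX).outW Γ r) r = r := by
        rw [Transducer.stepW_invT_outW, hr]
      obtain ⟨r', hr', hb⟩ := hbarA _ hne
      rw [Transducer.loop_unique hsync hne hr' hloop, Transducer.outW_invT_outW hinv] at hb
      exact ⟨hne, hloop, hb⟩
    obtain ⟨hne, hlp, hbp⟩ := hbar p hp
    obtain ⟨-, hlq, hbq⟩ := hbar q hq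
    have heq := hbij.injOn (Transducer.outW_length _ _ _) (Transducer.outW_length _ _ _)
      (hbp.trans hbq.symm)
    rw [← heq] at hlq
    exact hpq (Transducer.loop_unique hsync hne hlp hlq)
  · obtain ⟨m, hm, u, v, hu, hv, huv, hns⟩ := Transducer.exists_collision_not_shift
      (A.zmap_shiftZ k q0) hl hx hy hxy hfxy
    have hne : ∀ z : ℤ → Fin n, Transducer.window m z ≠ [] := fun z => by
      rw [← List.length_pos_iff, Transducer.window_length]; exact hm
    refine ⟨Transducer.window m u, Transducer.window m v, hne u, hne v,
      by simp only [Transducer.window_length], ?_, u, v,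
      Transducer.periodic_apply_window hu, Transducer.periodic_apply_window hv, huv⟩
    rintro ⟨i, hi, h⟩
    rw [Transducer.window_length] at hi
    exact hns ⟨-i, Transducer.shift_of_rotWord hu hv hm hi h⟩
end

section
/- Let A and B be synchronous transducers on X_n with A synchronizing at level j and B synchronizing at level k. Then the product A*B is synchronizing at level j + k. -/
/-- A word drives the second factor of the product through the output of the first factor. -/
theorem Transducer.stepW_prodT {X Q R : Type*} (A : Transducer X Q) (B : Transducer X R)
    (w : List X) (p : Q) (r : R) :
    (A.prodT B).stepW w (p, r) = (A.stepW w p, B.stepW (A.outW w p) r) := by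
  induction w generalizing p r with
  | nil => rfl
  | cons x w ih => exact ih _ _

theorem Transducer.length_outW {X Q : Type*} (A : Transducer X Q) (w : List X) (p : Q) :
    (A.outW w p).length = w.length := by
  induction w generalizing p with
  | nil => rfl
  | cons x w ih => simp [outW, ih]

/-- If `A` is synchronizing at level `j` and `B` is synchronizing at
level `k`, then the product `A*B` is synchronizing at level `j + k`. -/
theorem prod_synchronizing
    (n : ℕ) (hn : 2 ≤ n) {QA QB : Type*} [Fintype QA] [Fintype QB]
    (A : Transducer (Fin n) QA) (B : Transducer (Fin n) QB) (j k : ℕ)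
    (hA : A.Synchronizing j) (hB : B.Synchronizing k) :
    (A.prodT B).Synchronizing (j + k) := by
  rintro Γ hΓ ⟨p, r⟩ ⟨q, s⟩
  have hu : (Γ.take j).length = j := by simp; omega
  have hv : (Γ.drop j).length = k := by simp; omega
  rw [← List.take_append_drop j Γ]
  -- After the first `j` letters the `A`-components agree, so both copies of `B` read the
  -- same word of length `k` from then on.
  simp only [Transducer.stepW_append, Transducer.stepW_prodT, hA _ hu p q]
  exact congrArg (Prod.mk _) (hB _ ((A.length_outW _ _).trans hv) _ _)
end

section
/- Let A be a core synchronous transducer on X_n synchronizing at some level such that the maps f_{A^i} : X_n^ℤ → X_n^ℤ (i ≥ 1) are pairwise distinct. Then for all i ≠ j (i, j ≥ 1), every state u ∈ Q_A^i of A^i and every state v ∈ Q_A^j of A^j, the induced maps (A^i)_u and (A^j)_v on X_n^ℕ are distinct (u and v are not ω-equivalent). -/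
namespace Transducer

variable {X Q : Type*}

theorem length_outW_s12 (T : Transducer X Q) (w : List X) (q : Q) :
    (T.outW w q).length = w.length := by
  induction w generalizing q with
  | nil => rfl
  | cons x w ih => simp [outW, ih]

theorem powT_succ_stepW (T : Transducer X Q) (m : ℕ) (w : List X) (u : Fin (m + 1) → Q) :
    (T.powT (m + 1)).stepW w u =
      Fin.cons (T.stepW w (u 0)) ((T.powT m).stepW (T.outW w (u 0)) fun i => u i.succ) := by
  induction w generalizing u with
  | nil => exact (Fin.cons_self_tail u).symm
  | cons x w ih =>
    simp only [stepW, outW]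
    rw [ih]
    simp [powT]

theorem Synchronizing.powT {T : Transducer X Q} {k : ℕ} (h : T.Synchronizing k) (m : ℕ) :
    (T.powT m).Synchronizing (m * k) := by
  induction m with
  | zero => exact fun _ _ _ _ => Subsingleton.elim _ _
  | succ m ih =>
    intro w hw p q
    -- The first `k` letters synchronize the first coordinate; from then on the remaining
    -- coordinates read the same `m * k` letters.
    have hlen : w.length = k + m * k := by rw [hw]; ring
    have hk : (w.take k).length = k := by rw [List.length_take]; omega
    rw [← List.take_append_drop k w, stepW_append, stepW_append,
      powT_succ_stepW T m (w.drop k), powT_succ_stepW T m (w.drop k)]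
    have h0 : (T.powT (m + 1)).stepW (w.take k) p 0 = (T.powT (m + 1)).stepW (w.take k) q 0 := by
      rw [powT_succ_stepW, powT_succ_stepW, Fin.cons_zero, Fin.cons_zero]
      exact h _ hk _ _
    rw [h0]
    congr 1
    apply ih
    rw [length_outW_s12, List.length_drop]
    omega

/-- `f_T` is read off from the one-sided map of any single state, by starting that state at least
`a` letters to the left of the position of interest. -/
theorem zmap_eq_stateMap {T : Transducer X Q} {a K : ℕ} (h : T.Synchronizing a) (haK : a ≤ K)
    (q : Q) (x : ℤ → X) (z : ℤ) :
    T.zmap a q x z = T.stateMap q (fun j => x (z - (K : ℤ) + (j : ℤ))) K := by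
  obtain ⟨d, rfl⟩ := Nat.exists_eq_add_of_le' haK
  have hw : (List.range a).map (fun j => x (z - ((d + a : ℕ) : ℤ) + ((d + j : ℕ) : ℤ))) =
      (List.range a).map fun j : ℕ => x (z - (a : ℤ) + (j : ℤ)) := by
    refine List.map_congr_left fun j _ => congrArg x ?_
    push_cast
    ring
  -- In `zmap` the index list is coerced to `List ℤ`, as a monadic `bind`; this is a plain `map`.
  have hz : ((do let b ← List.range a; pure (b : ℤ)) : List ℤ) =
      (List.range a).map fun b : ℕ => (b : ℤ) := List.flatMap_pure_eq_map _ _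
  simp only [zmap, stateMap, List.range_add, List.map_append, List.map_map, stepW_append,
    Function.comp_def, hw, hz, sub_add_cancel]
  exact congrArg _ (h _ (by simp) _ _)

end Transducer

/-- Let `A` be a core synchronous transducer on `X_n` synchronizing at
level `k` whose powers induce pairwise distinct maps on `X_n^ℤ`.  Then for `i ≠ j`
(`i, j ≥ 1`) no state of `A^i` is ω-equivalent to a state of `A^j`. -/
theorem powers_not_omega_equivalent
    (n : ℕ) (hn : 2 ≤ n) {Q : Type*} [Fintype Q]
    (A : Transducer (Fin n) Q) (k : ℕ)
    (hcore : A.IsCore) (hsync : A.Synchronizing k)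
    (hdist : ∀ (i j : ℕ), 1 ≤ i → 1 ≤ j → i ≠ j →
      ∀ (u : Fin i → Q) (v : Fin j → Q),
        (A.powT i).zmap (i * k) u ≠ (A.powT j).zmap (j * k) v) :
    ∀ (i j : ℕ), 1 ≤ i → 1 ≤ j → i ≠ j →
      ∀ (u : Fin i → Q) (v : Fin j → Q),
        (A.powT i).stateMap u ≠ (A.powT j).stateMap v := by
  intro i j hi hj hij u v huv
  refine hdist i j hi hj hij u v ?_
  funext x z
  rw [Transducer.zmap_eq_stateMap (hsync.powT i) (le_max_left (i * k) (j * k)),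
    Transducer.zmap_eq_stateMap (hsync.powT j) (le_max_right (i * k) (j * k)), huv]
end
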